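/- Assume d ≥ 3 and let a, b > 0. Then there exist ε = ε_{b,a} > 0 and η = η_{b,a} > 0 such that for all N large enough, P̃_{N,a,b}(ξ̃_N > εN^d | Ω_N⁺) ≥ 1 − exp(−ηN^d), where ξ̃_N = ∑_{x∈Λ_N} 1_{φ(x)∈[0,a]} and Ω_N⁺ = {φ(x) ≥ 0 for all x ∈ Λ_N}. -/

import Mathlib

open MeasureTheory Real Finset

noncomputable section

/-- The nearest neighbours of a point of `ℤ^d`. -/
def nbrs (d : ℕ) (x : Fin d → ℤ) : Finset (Fin d → ℤ) :=
  (Finset.univ : Finset (Fin d × Bool)).image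
    (fun p => Function.update x p.1 (x p.1 + if p.2 then 1 else -1))

/-- Outer boundary of a finite subset of `ℤ^d`. -/
def bdry (d : ℕ) (A : Finset (Fin d → ℤ)) : Finset (Fin d → ℤ) :=
  A.biUnion (nbrs d) \ A

/-- The Gaussian free field Hamiltonian
`H_A(φ) = (1/8d) ∑_{x,y ∈ A ∪ ∂A, |x-y| = 1} (φ x - φ y)²`. -/
def ham (d : ℕ) (A : Finset (Fin d → ℤ)) (φ : (Fin d → ℤ) → ℝ) : ℝ :=
  (1 / (8 * d)) * ∑ x ∈ A ∪ bdry d A, ∑ y ∈ A ∪ bdry d A,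
    if y ∈ nbrs d x then (φ x - φ y) ^ 2 else 0

/-- Extension of a field on `A` by zero boundary conditions. -/
def extz {d : ℕ} (A : Finset (Fin d → ℤ)) (ψ : A → ℝ) : (Fin d → ℤ) → ℝ :=
  fun x => if h : x ∈ A then ψ ⟨x, h⟩ else 0

/-- Unnormalized density of the zero-boundary GFF on `A`. -/
def gffDensity (d : ℕ) (A : Finset (Fin d → ℤ)) (ψ : A → ℝ) : ℝ :=
  Real.exp (-ham d A (extz A ψ))

/-- Partition function of the zero-boundary GFF on `A`. -/
def gffZ (d : ℕ) (A : Finset (Fin d → ℤ)) : ℝ :=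
  ∫ ψ : A → ℝ, gffDensity d A ψ

/-- The zero-boundary Gaussian free field measure on `A ⊂ ℤ^d`. -/
def gff (d : ℕ) (A : Finset (Fin d → ℤ)) : Measure (A → ℝ) :=
  (ENNReal.ofReal (gffZ d A))⁻¹ •
    volume.withDensity (fun ψ => ENNReal.ofReal (gffDensity d A ψ))

/-- The box `Λ_N = {-⌊N/2⌋, …, ⌊N/2⌋}^d`. -/
def box (d N : ℕ) : Finset (Fin d → ℤ) :=
  Fintype.piFinset (fun _ => Finset.Icc (-(N / 2 : ℤ)) (N / 2 : ℤ))

/-- Unnormalized density of the square-well pinned field on `Λ_N`. -/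
def pinDensity (d N : ℕ) (a b : ℝ) (ψ : box d N → ℝ) : ℝ :=
  Real.exp (-ham d (box d N) (extz (box d N) ψ) +
    b * ∑ x : box d N, (if ψ x ∈ Set.Icc 0 a then (1 : ℝ) else 0))

/-- Partition function of the pinned field. -/
def pinZ (d N : ℕ) (a b : ℝ) : ℝ := ∫ ψ : box d N → ℝ, pinDensity d N a b ψ

/-- The square-well pinning measure `P̃_{N,a,b}` on the box `Λ_N`. -/
def pin (d N : ℕ) (a b : ℝ) : Measure (box d N → ℝ) :=
  (ENNReal.ofReal (pinZ d N a b))⁻¹ •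
    volume.withDensity (fun ψ => ENNReal.ofReal (pinDensity d N a b ψ))

/-- The number of pinned points `ξ̃_N`. -/
def numPinned (d N : ℕ) (a : ℝ) (ψ : box d N → ℝ) : ℕ :=
  (Finset.univ.filter (fun x : box d N => ψ x ∈ Set.Icc 0 a)).card

/-- The hard wall event `Ω⁺_B` within the box, for fields on `Λ_N`: nonnegativity
at every point of `B`. -/
def wallOn (d N : ℕ) (B : Finset (Fin d → ℤ)) : Set (box d N → ℝ) :=
  {ψ | ∀ x : box d N, (x : Fin d → ℤ) ∈ B → 0 ≤ ψ x}

/-- The hard-wall event for the zero-boundary GFF on `A`. -/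
def wall {d : ℕ} (A : Finset (Fin d → ℤ)) : Set (A → ℝ) := {ψ | ∀ x, 0 ≤ ψ x}

end

/-!
By Markov's inequality, few pinned sites on the wall event cost `exp (b ε N^d)` divided by the
expectation of `exp (b ξ̃)` over positive Gaussian free fields, so it suffices to bound this
expectation below by `exp (c N^d)`.

The energy does not increase under `φ ↦ |φ|`. Weighting each site by `1 - p` or `p` according to
its sign therefore gives an integral over all fields that is dominated by the one over positive
fields. After raising the field to a constant height `h`, Jensen's inequality bounds its logarithm
below by a sum of one-site expectations minus `h²` times the energy of the constant field, which is
only a surface term.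

In dimension at least three the one-site variances lie between positive constants `v₀` and `v₁`:
the upper bound comes from comparing the averages of a finitely supported function over successive
`ℓ¹`-spheres of an orthant, whose sizes have summable inverses. With `p = exp (-h² / (2 v₀))` a site
pays about `h² / (2 v₀)` times its probability of being negative, and is rewarded by `b` times that
of the well `[0, a]`, which is larger by a factor exponential in `h`. For large `h` each site thus
contributes a positive amount.
-/

section OrthantLevel

variable {ι : Type*} [Fintype ι] [DecidableEq ι]

/-- The lattice points of the orthant `ℕ^ι` at `ℓ¹`-distance `n` from the origin. -/
abbrev orthantLevel (ι : Type*) [Fintype ι] [DecidableEq ι] (n : ℕ) : Finset (ι → ℕ) :=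
  piAntidiag univ n

/-- The average of `f` over the lattice points at distance `n` from the origin. -/
noncomputable def levelAverage (f : (ι → ℕ) → ℝ) (n : ℕ) : ℝ :=
  (∑ p ∈ orthantLevel ι n, f p) / #(orthantLevel ι n)

/-- The Dirichlet energy of `f` on the bonds joining the levels `n` and `n + 1`. -/
noncomputable def levelEnergy (f : (ι → ℕ) → ℝ) (n : ℕ) : ℝ :=
  ∑ p ∈ orthantLevel ι n, ∑ i, (f p - f (p + Pi.single i 1)) ^ 2

theorem mem_orthantLevel {n : ℕ} {p : ι → ℕ} : p ∈ orthantLevel ι n ↔ ∑ i, p i = n := by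
  simp

theorem add_single_mem_orthantLevel {n : ℕ} {p : ι → ℕ} (hp : p ∈ orthantLevel ι n) (i : ι) :
    p + Pi.single i 1 ∈ orthantLevel ι (n + 1) := by
  rw [mem_orthantLevel] at hp ⊢
  simp [sum_add_distrib, hp]

theorem sum_orthantLevel_add_single (g : (ι → ℕ) → ℝ) (n : ℕ) (i : ι) :
    ∑ p ∈ orthantLevel ι n, ((p i : ℝ) + 1) * g (p + Pi.single i 1) =
      ∑ q ∈ orthantLevel ι (n + 1), (q i : ℝ) * g q := by
  refine sum_of_injOn (· + Pi.single i 1) (add_left_injective _).injOn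
    (fun p hp => add_single_mem_orthantLevel hp i) (fun q hq hq' => ?_) (fun p _ => by simp)
  suffices q i = 0 by simp [this]
  by_contra h
  have hle : Pi.single i 1 ≤ q := by
    simpa [Pi.single, update_le_iff, Nat.one_le_iff_ne_zero] using h
  refine hq' ⟨q - Pi.single i 1, ?_, tsub_add_cancel_of_le hle⟩
  have hsum := mem_orthantLevel.mp hq
  rw [← tsub_add_cancel_of_le hle] at hsum
  rw [mem_coe, mem_orthantLevel]
  simpa [sum_add_distrib] using hsum

theorem sum_orthantLevel_sum_add_single (g : (ι → ℕ) → ℝ) (n : ℕ) :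
    ∑ p ∈ orthantLevel ι n, ∑ i, ((p i : ℝ) + 1) * g (p + Pi.single i 1) =
      (n + 1) * ∑ q ∈ orthantLevel ι (n + 1), g q := by
  rw [sum_comm, sum_congr rfl fun i _ => sum_orthantLevel_add_single g n i, sum_comm, mul_sum]
  refine sum_congr rfl fun q hq => ?_
  rw [← sum_mul]
  exact_mod_cast congrArg (fun m : ℕ => (m : ℝ) * g q) (mem_orthantLevel.mp hq)

theorem sum_add_one_of_mem_orthantLevel {n : ℕ} {p : ι → ℕ} (hp : p ∈ orthantLevel ι n) :
    ∑ i, ((p i : ℝ) + 1) = n + Fintype.card ι := by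
  rw [sum_add_distrib, sum_const, card_univ, nsmul_one]
  exact_mod_cast congrArg (fun m : ℕ => (m : ℝ) + Fintype.card ι) (mem_orthantLevel.mp hp)

theorem card_orthantLevel_succ (n : ℕ) :
    (n + 1 : ℝ) * #(orthantLevel ι (n + 1)) =
      (n + Fintype.card ι) * #(orthantLevel ι n) := by
  have h := sum_orthantLevel_sum_add_single (ι := ι) (fun _ => 1) n
  simp only [mul_one, sum_const, nsmul_one] at h
  rw [← h, sum_congr rfl fun p hp => sum_add_one_of_mem_orthantLevel hp, sum_const, nsmul_eq_mul,
    mul_comm]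

theorem card_orthantLevel_ge (hι : 3 ≤ Fintype.card ι) (n : ℕ) :
    ((n + 1) * (n + 2) / 2 : ℝ) ≤ #(orthantLevel ι n) := by
  have hι' : (3 : ℝ) ≤ Fintype.card ι := by exact_mod_cast hι
  induction n with
  | zero => simp
  | succ n ih =>
    have hn : (0 : ℝ) < n + 1 := by positivity
    refine le_of_mul_le_mul_left ?_ hn
    calc (n + 1 : ℝ) * (((n + 1 : ℕ) + 1) * ((n + 1 : ℕ) + 2) / 2)
        = (n + 3) * ((n + 1) * (n + 2) / 2) := by push_cast; ring
      _ ≤ (n + Fintype.card ι) * #(orthantLevel ι n) := by gcongr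
      _ = (n + 1) * #(orthantLevel ι (n + 1)) := (card_orthantLevel_succ n).symm

theorem card_orthantLevel_pos [Nonempty ι] (n : ℕ) : 0 < #(orthantLevel ι n) :=
  card_pos.mpr ⟨Pi.single (Classical.arbitrary ι) n, mem_orthantLevel.mpr (by simp)⟩

-- Sending the share `(pᵢ + 1) / (n + card ι)` of the mass of `p` to `p + eᵢ`, for each `i`,
-- transports the uniform distribution of level `n` to that of level `n + 1`.
theorem card_mul_levelAverage_sub [Nonempty ι] (f : (ι → ℕ) → ℝ) (n : ℕ) :
    #(orthantLevel ι n) * (levelAverage f n - levelAverage f (n + 1)) =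
      ∑ p ∈ orthantLevel ι n, ∑ i,
        ((p i : ℝ) + 1) / (n + Fintype.card ι) * (f p - f (p + Pi.single i 1)) := by
  have hc (m : ℕ) : (0 : ℝ) < #(orthantLevel ι m) := by exact_mod_cast card_orthantLevel_pos m
  have hout : ∑ p ∈ orthantLevel ι n, ∑ i, ((p i : ℝ) + 1) * f p =
      (n + Fintype.card ι) * ∑ p ∈ orthantLevel ι n, f p := by
    rw [mul_sum]
    refine sum_congr rfl fun p hp => ?_
    rw [← sum_mul, sum_add_one_of_mem_orthantLevel hp]
  simp_rw [div_mul_eq_mul_div, ← sum_div, mul_sub, sum_sub_distrib]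
  rw [hout, sum_orthantLevel_sum_add_single, levelAverage, levelAverage]
  field_simp [(hc n).ne', (hc (n + 1)).ne']
  linear_combination (∑ q ∈ orthantLevel ι (n + 1), f q) * card_orthantLevel_succ (ι := ι) n

theorem card_mul_sq_levelAverage_sub_le [Nonempty ι] (f : (ι → ℕ) → ℝ) (n : ℕ) :
    #(orthantLevel ι n) * (levelAverage f n - levelAverage f (n + 1)) ^ 2 ≤ levelEnergy f n := by
  have hc : (0 : ℝ) < #(orthantLevel ι n) := by exact_mod_cast card_orthantLevel_pos n
  set c := (#(orthantLevel ι n) : ℝ)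
  have hk : (0 : ℝ) < n + Fintype.card ι := by positivity
  set w : (ι → ℕ) × ι → ℝ := fun z => ((z.1 z.2 : ℝ) + 1) / (n + Fintype.card ι)
  set D : (ι → ℕ) × ι → ℝ := fun z => f z.1 - f (z.1 + Pi.single z.2 1)
  have hw_nonneg (z) : 0 ≤ w z := by positivity
  have hw_sum {p : ι → ℕ} (hp : p ∈ orthantLevel ι n) : ∑ i, w (p, i) = 1 := by
    rw [← sum_div, sum_add_one_of_mem_orthantLevel hp, div_self hk.ne']
  have hw_le {z} (hz : z ∈ orthantLevel ι n ×ˢ univ) : w z ≤ 1 :=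
    (single_le_sum (fun i _ => hw_nonneg (z.1, i)) (mem_univ z.2)).trans_eq
      (hw_sum (mem_product.mp hz).1)
  have hmass : ∑ z ∈ orthantLevel ι n ×ˢ univ, w z = c := by
    rw [sum_product, sum_congr rfl fun p hp => hw_sum hp, sum_const, nsmul_one]
  have henergy : ∑ z ∈ orthantLevel ι n ×ˢ univ, D z ^ 2 = levelEnergy f n := sum_product _ _ _
  have hflow : ∑ z ∈ orthantLevel ι n ×ˢ univ, w z * D z =
      c * (levelAverage f n - levelAverage f (n + 1)) := by
    rw [sum_product, card_mul_levelAverage_sub]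
  have hCS := sum_sq_le_sum_mul_sum_of_sq_le_mul (orthantLevel ι n ×ˢ univ)
    (r := fun z => w z * D z) (fun z _ => hw_nonneg z) (fun z _ => sq_nonneg (D z)) fun z hz => by
      rw [mul_pow]
      gcongr
      exact pow_le_of_le_one (hw_nonneg z) (hw_le hz) two_ne_zero
  rw [hflow, hmass, henergy, mul_pow, sq c, mul_assoc] at hCS
  exact le_of_mul_le_mul_left hCS hc

theorem sum_inv_card_orthantLevel_le (hι : 3 ≤ Fintype.card ι) (M : ℕ) :
    ∑ n ∈ range M, (#(orthantLevel ι n) : ℝ)⁻¹ ≤ 2 := by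
  have htele (n : ℕ) : (((n + 1) * (n + 2) / 2 : ℝ))⁻¹ = 2 / (n + 1) - 2 / ((n + 1 : ℕ) + 1) := by
    push_cast
    field_simp
    ring
  calc ∑ n ∈ range M, (#(orthantLevel ι n) : ℝ)⁻¹
      ≤ ∑ n ∈ range M, (((n + 1) * (n + 2) / 2 : ℝ))⁻¹ := by
        gcongr with n
        exact card_orthantLevel_ge hι n
    _ = 2 - 2 / (M + 1) := by
        rw [sum_congr rfl fun n _ => htele n, sum_range_sub' fun n : ℕ => (2 : ℝ) / (n + 1)]
        simp
    _ ≤ 2 := sub_le_self _ (by positivity)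

/-- Transience of `ℕ^ι` in dimension at least three. -/
theorem sq_apply_zero_le_sum_levelEnergy (hι : 3 ≤ Fintype.card ι) (f : (ι → ℕ) → ℝ) (M : ℕ)
    (hf : ∀ p ∈ orthantLevel ι M, f p = 0) :
    f 0 ^ 2 ≤ 2 * ∑ n ∈ range M, levelEnergy f n := by
  have : Nonempty ι := Fintype.card_pos_iff.mp (by lia)
  have hc (n : ℕ) : (0 : ℝ) < #(orthantLevel ι n) := by exact_mod_cast card_orthantLevel_pos n
  have htele : f 0 = ∑ n ∈ range M, (levelAverage f n - levelAverage f (n + 1)) := by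
    rw [sum_range_sub', levelAverage, levelAverage, sum_eq_zero hf]
    simp
  calc f 0 ^ 2
      ≤ (∑ n ∈ range M, (#(orthantLevel ι n) : ℝ)⁻¹) * ∑ n ∈ range M,
          #(orthantLevel ι n) * (levelAverage f n - levelAverage f (n + 1)) ^ 2 := by
        rw [htele]
        refine sum_sq_le_sum_mul_sum_of_sq_le_mul _ (fun n _ => (inv_pos.mpr (hc n)).le)
          (fun n _ => by positivity) fun n _ => ?_
        rw [inv_mul_cancel_left₀ (hc n).ne']
    _ ≤ 2 * ∑ n ∈ range M, levelEnergy f n := by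
        gcongr with n
        · exact sum_inv_card_orthantLevel_le hι M
        · exact card_mul_sq_levelAverage_sub_le f n

end OrthantLevel

section Lattice

variable {d : ℕ} {A : Finset (Fin d → ℤ)}

theorem mem_nbrs {x y : Fin d → ℤ} :
    y ∈ nbrs d x ↔ ∃ i, y = x + Pi.single i 1 ∨ x = y + Pi.single i 1 := by
  have hup (x : Fin d → ℤ) (i : Fin d) (c : ℤ) :
      Function.update x i (x i + c) = x + Pi.single i c := by
    ext j
    by_cases hj : j = i <;> simp [hj]
  have hneg (x y : Fin d → ℤ) (i : Fin d) : x + Pi.single i (-1) = y ↔ x = y + Pi.single i 1 := by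
    rw [Pi.single_neg, ← sub_eq_add_neg, sub_eq_iff_eq_add]
  simp [nbrs, hup, hneg, eq_comm (a := y), or_comm]

theorem mem_nbrs_comm {x y : Fin d → ℤ} : y ∈ nbrs d x ↔ x ∈ nbrs d y := by
  simp only [mem_nbrs, or_comm]

theorem card_nbrs_le (x : Fin d → ℤ) : #(nbrs d x) ≤ 2 * d := by
  refine card_image_le.trans_eq ?_
  simp [mul_comm]

theorem mem_union_bdry_of_mem_nbrs {x y : Fin d → ℤ} (hx : x ∈ A) (hy : y ∈ nbrs d x) :
    y ∈ A ∪ bdry d A := by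
  rw [bdry, union_sdiff_self_eq_union]
  exact mem_union_right _ (mem_biUnion.mpr ⟨x, hx, hy⟩)

theorem eight_mul_ham (hd : 0 < d) (f : (Fin d → ℤ) → ℝ) :
    8 * d * ham d A f = ∑ x ∈ A ∪ bdry d A, ∑ y ∈ A ∪ bdry d A,
      if y ∈ nbrs d x then (f x - f y) ^ 2 else 0 := by
  rw [ham]
  field_simp

theorem sum_nbrs_sq_sub {f : (Fin d → ℤ) → ℝ} (hf : ∀ z ∉ A, f z = 0) (x : Fin d → ℤ) :
    ∑ y ∈ nbrs d x, (f x - f y) ^ 2 = if x ∈ A ∪ bdry d A then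
      ∑ y ∈ A ∪ bdry d A, if y ∈ nbrs d x then (f x - f y) ^ 2 else 0 else 0 := by
  have hzero {y} (hx : x ∉ A) (hy : y ∉ A) : (f x - f y) ^ 2 = 0 := by simp [hf x hx, hf y hy]
  split_ifs with hx
  · rw [sum_ite_mem, inter_comm, ← sum_ite_mem]
    refine sum_congr rfl fun y hy => ?_
    split_ifs with hyA
    · rfl
    · exact hzero (fun h => hyA (mem_union_bdry_of_mem_nbrs h hy))
        fun h => hyA (mem_union_left _ h)
  · exact sum_eq_zero fun y hy => hzero (fun h => hx (mem_union_left _ h))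
      fun h => hx (mem_union_bdry_of_mem_nbrs h (mem_nbrs_comm.mp hy))

theorem sum_sum_nbrs_sq_sub_le (hd : 0 < d) {f : (Fin d → ℤ) → ℝ} (hf : ∀ z ∉ A, f z = 0)
    (P : Finset (Fin d → ℤ)) :
    ∑ x ∈ P, ∑ y ∈ nbrs d x, (f x - f y) ^ 2 ≤ 8 * d * ham d A f := by
  rw [eight_mul_ham hd, sum_congr rfl fun x _ => sum_nbrs_sq_sub hf x, sum_ite_mem]
  exact sum_le_sum_of_subset_of_nonneg inter_subset_right fun x _ _ =>
    sum_nonneg fun y _ => by split_ifs <;> positivity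

/-- The point of the orthant with corner `x` at offset `p` from that corner. -/
def orthantPoint (x : Fin d → ℤ) (p : Fin d → ℕ) : Fin d → ℤ := fun i => x i + p i

theorem orthantPoint_injective (x : Fin d → ℤ) : Function.Injective (orthantPoint x) :=
  fun p q h => funext fun i => by simpa [orthantPoint] using congrFun h i

theorem sum_orthantPoint_add_single_le (f : (Fin d → ℤ) → ℝ) (x : Fin d → ℤ) (p : Fin d → ℕ) :
    ∑ i, (f (orthantPoint x p) - f (orthantPoint x (p + Pi.single i 1))) ^ 2 ≤
      ∑ y ∈ nbrs d (orthantPoint x p), (f (orthantPoint x p) - f y) ^ 2 := by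
  set z := orthantPoint x p with hz
  have hstep (i : Fin d) : orthantPoint x (p + Pi.single i 1) = z + Pi.single i 1 := by
    ext j
    simp [hz, orthantPoint, Pi.single_apply, add_assoc]
  have hinj : Function.Injective fun i : Fin d => z + Pi.single i (1 : ℤ) :=
    (add_right_injective z).comp fun i j h => by
      simpa [Pi.single_apply, eq_comm] using congrFun h i
  simp only [hstep]
  rw [← sum_image (g := fun i => z + Pi.single i 1) (f := fun y => (f z - f y) ^ 2) hinj.injOn]
  refine sum_le_sum_of_subset_of_nonneg (fun y hy => ?_) fun y _ _ => sq_nonneg _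
  obtain ⟨i, -, rfl⟩ := mem_image.mp hy
  exact mem_nbrs.mpr ⟨i, Or.inl rfl⟩

theorem sum_levelEnergy_le_ham (hd : 0 < d) {f : (Fin d → ℤ) → ℝ} (hf : ∀ z ∉ A, f z = 0)
    (x : Fin d → ℤ) (M : ℕ) :
    ∑ n ∈ range M, levelEnergy (f ∘ orthantPoint x) n ≤ 8 * d * ham d A f := by
  have hdisj : Set.PairwiseDisjoint (range M : Set ℕ) (orthantLevel (Fin d)) :=
    fun m _ n _ hmn => disjoint_left.mpr fun p hm hn =>
      hmn ((mem_orthantLevel.mp hm).symm.trans (mem_orthantLevel.mp hn))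
  calc ∑ n ∈ range M, levelEnergy (f ∘ orthantPoint x) n
      ≤ ∑ n ∈ range M, ∑ p ∈ orthantLevel (Fin d) n, ∑ y ∈ nbrs d (orthantPoint x p),
          (f (orthantPoint x p) - f y) ^ 2 :=
        sum_le_sum fun n _ => sum_le_sum fun p _ => sum_orthantPoint_add_single_le f x p
    _ = ∑ z ∈ ((range M).biUnion (orthantLevel (Fin d))).image (orthantPoint x),
          ∑ y ∈ nbrs d z, (f z - f y) ^ 2 := by
        rw [sum_image (orthantPoint_injective x).injOn, sum_biUnion hdisj]
    _ ≤ 8 * d * ham d A f := sum_sum_nbrs_sq_sub_le hd hf _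

theorem sq_apply_le_ham (hd : 3 ≤ d) {f : (Fin d → ℤ) → ℝ} (hf : ∀ z ∉ A, f z = 0)
    (x : Fin d → ℤ) : f x ^ 2 ≤ 16 * d * ham d A f := by
  obtain ⟨M, hM⟩ := Infinite.exists_notMem_finset (A.image fun z => ∑ i, (z i - x i).toNat)
  have hvanish : ∀ p ∈ orthantLevel (Fin d) M, (f ∘ orthantPoint x) p = 0 := fun p hp =>
    hf _ fun hA => hM (mem_image.mpr ⟨_, hA, by simpa [orthantPoint] using hp⟩)
  have hx : orthantPoint x 0 = x := by ext i; simp [orthantPoint]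
  calc f x ^ 2 = (f ∘ orthantPoint x) 0 ^ 2 := by rw [Function.comp_apply, hx]
    _ ≤ 2 * ∑ n ∈ range M, levelEnergy (f ∘ orthantPoint x) n :=
        sq_apply_zero_le_sum_levelEnergy (by simpa using hd) _ M hvanish
    _ ≤ 2 * (8 * d * ham d A f) := by
        gcongr
        exact sum_levelEnergy_le_ham (by lia) hf x M
    _ = 16 * d * ham d A f := by ring

end Lattice

section GaussianField

open ProbabilityTheory
open scoped ENNReal NNReal

theorem map_eq_gaussianReal_of_mgf_eq {Ω : Type*} [MeasurableSpace Ω] {P : Measure Ω}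
    [IsProbabilityMeasure P] {X : Ω → ℝ} (hX : AEMeasurable X P) (m : ℝ) (v : ℝ≥0)
    (h : ∀ t, mgf X P t = rexp (m * t + v * t ^ 2 / 2)) : P.map X = gaussianReal m v := by
  have hmgf : mgf X P = mgf id (gaussianReal m v) := funext fun t => by
    rw [h, mgf_id_gaussianReal]
  have huniv : integrableExpSet X P = Set.univ := by
    rw [integrableExpSet_eq_of_mgf hmgf, integrableExpSet_id_gaussianReal]
  have hcomplex : complexMGF X P = complexMGF id (gaussianReal m v) := funext fun z =>
    eqOn_complexMGF_of_mgf hmgf (by simp [huniv])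
  simpa using Measure.ext_of_complexMGF_eq hX aemeasurable_id hcomplex

/-- A quadratic form that dominates the square of every coordinate, up to the factor `C`: the
corresponding Gaussian field then has pointwise variances at most `C / 2`. -/
structure IsPointwiseCoercive {ι : Type*} (B : LinearMap.BilinForm ℝ (ι → ℝ)) (C : ℝ) : Prop where
  pos : 0 < C
  sq_le : ∀ (φ : ι → ℝ) (x : ι), φ x ^ 2 ≤ C * B φ φ

/-- The centred Gaussian field on `ι` with density proportional to `exp (-B φ φ)`. -/
noncomputable def gaussianField {ι : Type*} [Fintype ι] (B : LinearMap.BilinForm ℝ (ι → ℝ)) :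
    Measure (ι → ℝ) :=
  volume.tilted fun φ => -B φ φ

variable {ι : Type*} {B : LinearMap.BilinForm ℝ (ι → ℝ)} {C : ℝ}

theorem IsPointwiseCoercive.self_nonneg (hB : IsPointwiseCoercive B C) (φ : ι → ℝ) :
    0 ≤ B φ φ := by
  rcases isEmpty_or_nonempty ι with _ | ⟨⟨x⟩⟩
  · simp [Subsingleton.elim φ 0]
  · exact nonneg_of_mul_nonneg_right ((sq_nonneg _).trans (hB.sq_le φ x)) hB.pos

theorem IsPointwiseCoercive.eq_zero (hB : IsPointwiseCoercive B C) {φ : ι → ℝ}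
    (h : B φ φ = 0) : φ = 0 :=
  funext fun x => pow_eq_zero_iff two_ne_zero |>.mp <|
    le_antisymm (by simpa [h] using hB.sq_le φ x) (sq_nonneg _)

theorem IsPointwiseCoercive.nondegenerate (hB : IsPointwiseCoercive B C) (hsymm : B.IsSymm) :
    B.Nondegenerate :=
  (B.nondegenerate_iff hB.self_nonneg (LinearMap.BilinForm.isSymm_iff.mp hsymm)).mpr fun φ =>
    ⟨hB.eq_zero, fun h => by simp [h]⟩

theorem measurable_bilinForm_right [Finite ι] (w : ι → ℝ) : Measurable fun φ => B φ w :=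
  (LinearMap.continuous_of_finiteDimensional (B.flip w)).measurable

theorem continuous_bilinForm_self [Finite ι] : Continuous fun φ => B φ φ := by
  have := Fintype.ofFinite ι
  have h := (LinearMap.toContinuousBilinearMap B).continuous₂
  exact h.comp (continuous_id.prodMk continuous_id)

variable [Fintype ι]

theorem IsPointwiseCoercive.integrable_exp (hB : IsPointwiseCoercive B C) :
    Integrable fun φ => rexp (-B φ φ) := by
  have hCpos := hB.pos
  set c : ℝ := (C * (Fintype.card ι + 1))⁻¹
  have hc : 0 < c := by positivity
  have hsum (φ : ι → ℝ) : ∑ x, c * φ x ^ 2 ≤ B φ φ := by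
    calc ∑ x, c * φ x ^ 2 ≤ ∑ _x : ι, c * (C * B φ φ) := by
          gcongr with x
          exact hB.sq_le φ x
      _ = Fintype.card ι / (Fintype.card ι + 1) * B φ φ := by
          rw [sum_const, card_univ, nsmul_eq_mul]
          simp only [c]
          field_simp
      _ ≤ B φ φ := mul_le_of_le_one_left (hB.self_nonneg φ)
          (div_le_one_of_le₀ (by linarith) (by positivity))
  refine Integrable.mono' (Integrable.fintype_prod (μ := fun _ => volume)
    fun _ => integrable_exp_neg_mul_sq hc) ?_ (Filter.Eventually.of_forall fun φ => ?_)
  · exact (Real.continuous_exp.comp continuous_bilinForm_self.neg).aestronglyMeasurable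
  · rw [Real.norm_eq_abs, abs_exp, ← Real.exp_sum]
    simpa [neg_mul, sum_neg_distrib] using hsum φ

theorem IsPointwiseCoercive.isProbabilityMeasure_gaussianField (hB : IsPointwiseCoercive B C) :
    IsProbabilityMeasure (gaussianField B) :=
  isProbabilityMeasure_tilted hB.integrable_exp

/-- The Cameron–Martin formula. -/
theorem lintegral_gaussianField_eq_lintegral_add (hsymm : B.IsSymm) (v : ι → ℝ)
    (F : (ι → ℝ) → ℝ≥0∞) :
    ∫⁻ φ, F φ ∂gaussianField B =
      ∫⁻ φ, ENNReal.ofReal (rexp (-2 * B φ v - B v v)) * F (φ + v) ∂gaussianField B := by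
  rw [gaussianField, lintegral_tilted, lintegral_tilted, ← lintegral_add_right_eq_self _ v]
  refine lintegral_congr fun φ => ?_
  have hexp : -B (φ + v) (φ + v) = -B φ φ + (-2 * B φ v - B v v) := by
    simp only [map_add, LinearMap.add_apply, hsymm.eq v φ]
    ring
  rw [hexp, Real.exp_add, mul_div_right_comm, ENNReal.ofReal_mul (by positivity), mul_assoc]

theorem IsPointwiseCoercive.mgf_gaussianField (hB : IsPointwiseCoercive B C) (hsymm : B.IsSymm)
    (w : ι → ℝ) (t : ℝ) :
    mgf (fun φ => B φ w) (gaussianField B) t = rexp (t ^ 2 * B w w / 4) := by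
  have := hB.isProbabilityMeasure_gaussianField
  have hshift (φ : ι → ℝ) : -2 * B φ (-(t / 2) • w) - B (-(t / 2) • w) (-(t / 2) • w) =
      t * B φ w - t ^ 2 * B w w / 4 := by
    simp only [map_smul, LinearMap.smul_apply, smul_eq_mul]
    ring
  have hlint := lintegral_gaussianField_eq_lintegral_add hsymm (-(t / 2) • w) 1
  simp only [hshift, Pi.one_apply, mul_one, lintegral_one, measure_univ] at hlint
  have hint : ∫ φ, rexp (t * B φ w - t ^ 2 * B w w / 4) ∂gaussianField B = 1 := by
    rw [integral_eq_lintegral_of_nonneg_ae (Filter.Eventually.of_forall fun φ => by positivity)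
      (by have := measurable_bilinForm_right (B := B) w; fun_prop), ← hlint, ENNReal.toReal_one]
  simp only [Real.exp_sub, integral_div] at hint
  rwa [div_eq_one_iff_eq (exp_ne_zero _)] at hint

theorem IsPointwiseCoercive.map_bilinForm_right_gaussianField (hB : IsPointwiseCoercive B C)
    (hsymm : B.IsSymm) (w : ι → ℝ) :
    (gaussianField B).map (fun φ => B φ w) = gaussianReal 0 (B w w / 2).toNNReal := by
  have := hB.isProbabilityMeasure_gaussianField
  refine map_eq_gaussianReal_of_mgf_eq (measurable_bilinForm_right w).aemeasurable _ _ fun t => ?_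
  rw [hB.mgf_gaussianField hsymm, Real.coe_toNNReal _ (by have := hB.self_nonneg w; positivity)]
  ring_nf

theorem IsPointwiseCoercive.integrable_bilinForm_right (hB : IsPointwiseCoercive B C)
    (hsymm : B.IsSymm) (w : ι → ℝ) : Integrable (fun φ => B φ w) (gaussianField B) := by
  have hid : Integrable id ((gaussianField B).map fun φ => B φ w) := by
    rw [hB.map_bilinForm_right_gaussianField hsymm]
    exact (memLp_id_gaussianReal 1).integrable le_rfl
  exact hid.comp_measurable (measurable_bilinForm_right w)

theorem IsPointwiseCoercive.integral_bilinForm_right (hB : IsPointwiseCoercive B C)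
    (hsymm : B.IsSymm) (w : ι → ℝ) : ∫ φ, B φ w ∂gaussianField B = 0 := by
  calc ∫ φ, B φ w ∂gaussianField B = ∫ t, t ∂(gaussianField B).map fun φ => B φ w :=
        (integral_map (measurable_bilinForm_right w).aemeasurable
          aestronglyMeasurable_id).symm
    _ = 0 := by rw [hB.map_bilinForm_right_gaussianField hsymm, integral_id_gaussianReal]

theorem IsPointwiseCoercive.exists_map_eval_gaussianField [DecidableEq ι]
    (hB : IsPointwiseCoercive B C) (hsymm : B.IsSymm) {K : ℝ} {x : ι}
    (hx : B (Pi.single x 1) (Pi.single x 1) ≤ K) :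
    ∃ v : ℝ≥0, 1 ≤ 2 * K * v ∧ 2 * v ≤ C ∧
      (gaussianField B).map (fun φ => φ x) = gaussianReal 0 v := by
  set w := (B.toDual (hB.nondegenerate hsymm)).symm (LinearMap.proj x) with hw_def
  have hw (φ : ι → ℝ) : B φ w = φ x := by
    rw [hsymm.eq, hw_def, LinearMap.BilinForm.apply_toDual_symm_apply, LinearMap.proj_apply]
  have hww := hB.self_nonneg w
  have hv : ((B w w / 2).toNNReal : ℝ) = B w w / 2 := Real.coe_toNNReal _ (by positivity)
  refine ⟨(B w w / 2).toNNReal, ?_, ?_, ?_⟩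
  · have hCS := B.apply_mul_apply_le_of_forall_zero_le hB.self_nonneg (Pi.single x 1) w
    rw [hsymm.eq w, hw, Pi.single_eq_same, one_mul] at hCS
    rw [hv]
    nlinarith
  · have hle := hB.sq_le w x
    rw [← hw w] at hle
    rw [hv]
    by_contra! hlt
    nlinarith [hB.pos]
  · simpa only [hw] using hB.map_bilinForm_right_gaussianField hsymm w

end GaussianField

section HamiltonianForm

variable {d : ℕ} {A : Finset (Fin d → ℤ)}

theorem extz_of_notMem (ψ : A → ℝ) {z : Fin d → ℤ} (hz : z ∉ A) : extz A ψ z = 0 := dif_neg hz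

theorem extz_coe (ψ : A → ℝ) (x : A) : extz A ψ x = ψ x := dif_pos x.2

theorem extz_abs (ψ : A → ℝ) (z : Fin d → ℤ) : extz A |ψ| z = |extz A ψ z| := by
  by_cases hz : z ∈ A <;> simp [extz, hz]

/-- The value at `z` of the extension by zero, as a linear functional of the field on `A`. -/
def extzLinear (A : Finset (Fin d → ℤ)) (z : Fin d → ℤ) : (A → ℝ) →ₗ[ℝ] ℝ where
  toFun ψ := extz A ψ z
  map_add' ψ χ := by by_cases hz : z ∈ A <;> simp [extz, hz]
  map_smul' c ψ := by by_cases hz : z ∈ A <;> simp [extz, hz]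

/-- The Hamiltonian with zero boundary conditions, polarized to a bilinear form on fields on `A`. -/
noncomputable def hamForm (d : ℕ) (A : Finset (Fin d → ℤ)) : LinearMap.BilinForm ℝ (A → ℝ) :=
  (1 / (8 * d) : ℝ) • ∑ x ∈ A ∪ bdry d A, ∑ y ∈ A ∪ bdry d A,
    if y ∈ nbrs d x then LinearMap.BilinForm.linMulLin (extzLinear A x - extzLinear A y)
      (extzLinear A x - extzLinear A y) else 0

theorem hamForm_apply (φ ψ : A → ℝ) :
    hamForm d A φ ψ = (1 / (8 * d)) * ∑ x ∈ A ∪ bdry d A, ∑ y ∈ A ∪ bdry d A,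
      if y ∈ nbrs d x then
        (extz A φ x - extz A φ y) * (extz A ψ x - extz A ψ y) else 0 := by
  rw [hamForm, LinearMap.smul_apply, LinearMap.smul_apply, smul_eq_mul]
  simp only [LinearMap.sum_apply]
  congr! 3 with x _ y _
  split_ifs
  · rfl
  · simp

theorem hamForm_self (ψ : A → ℝ) : hamForm d A ψ ψ = ham d A (extz A ψ) := by
  simp only [hamForm_apply, ham, sq]

theorem hamForm_isSymm : (hamForm d A).IsSymm :=
  ⟨fun φ ψ => by simp only [hamForm_apply, mul_comm]⟩

theorem isPointwiseCoercive_hamForm (hd : 3 ≤ d) : IsPointwiseCoercive (hamForm d A) (16 * d) where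
  pos := by positivity
  sq_le φ x := by
    rw [hamForm_self, ← extz_coe φ x]
    exact sq_apply_le_ham hd (fun _ => extz_of_notMem φ) x

theorem hamForm_abs_le (ψ : A → ℝ) : hamForm d A |ψ| |ψ| ≤ hamForm d A ψ ψ := by
  rw [hamForm_self, hamForm_self, ham, ham]
  gcongr with x _ y _
  split_ifs
  · rw [extz_abs, extz_abs]
    exact sq_le_sq.mpr (abs_abs_sub_abs_le _ _)
  · rfl

/-- The points of `T` that have a neighbour outside `T`. -/
def innerBoundary (d : ℕ) (T : Finset (Fin d → ℤ)) : Finset (Fin d → ℤ) :=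
  {x ∈ T | ¬ nbrs d x ⊆ T}

theorem mem_innerBoundary {T : Finset (Fin d → ℤ)} {x y : Fin d → ℤ} (hx : x ∈ T) (hy : y ∉ T)
    (hxy : y ∈ nbrs d x) : x ∈ innerBoundary d T :=
  mem_filter.mpr ⟨hx, fun h => hy (h hxy)⟩

theorem sum_sum_mem_and_mem_nbrs_le (S T : Finset (Fin d → ℤ)) :
    ∑ x ∈ S, ∑ y ∈ S, (if x ∈ T ∧ y ∈ nbrs d x then 1 else 0 : ℝ) ≤ 2 * d * #T := by
  have hrow (x) : ∑ y ∈ S, (if x ∈ T ∧ y ∈ nbrs d x then 1 else 0 : ℝ) ≤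
      if x ∈ T then (2 * d : ℝ) else 0 := by
    split_ifs with hx
    · simp only [hx, true_and, sum_boole]
      exact_mod_cast (card_le_card fun y hy => (mem_filter.mp hy).2).trans (card_nbrs_le x)
    · simp [hx]
  calc ∑ x ∈ S, ∑ y ∈ S, (if x ∈ T ∧ y ∈ nbrs d x then 1 else 0 : ℝ)
      ≤ ∑ x ∈ S, if x ∈ T then (2 * d : ℝ) else 0 := sum_le_sum fun x _ => hrow x
    _ = 2 * d * #(S ∩ T) := by rw [sum_ite_mem, sum_const, nsmul_eq_mul, mul_comm]
    _ ≤ 2 * d * #T := by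
      gcongr
      exact inter_subset_right

theorem ham_indicator_le (hd : 0 < d) (A T : Finset (Fin d → ℤ)) :
    ham d A (fun z => if z ∈ T then 1 else 0) ≤ #(innerBoundary d T) := by
  set S := A ∪ bdry d A
  set t : (Fin d → ℤ) → (Fin d → ℤ) → ℝ := fun x y =>
    if x ∈ innerBoundary d T ∧ y ∈ nbrs d x then 1 else 0
  have ht_nonneg (x y) : 0 ≤ t x y := by simp only [t]; positivity
  have hpair (x y) : (if y ∈ nbrs d x then
      ((if x ∈ T then 1 else 0) - (if y ∈ T then 1 else 0)) ^ 2 else 0 : ℝ) ≤ t x y + t y x := by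
    have hsum := add_nonneg (ht_nonneg x y) (ht_nonneg y x)
    split_ifs with hxy hx hy hy
    · simpa using hsum
    · simpa [t, mem_innerBoundary hx hy hxy, hxy] using ht_nonneg y x
    · simpa [t, mem_innerBoundary hy hx (mem_nbrs_comm.mp hxy), mem_nbrs_comm.mp hxy]
        using ht_nonneg x y
    · simpa using hsum
    · exact hsum
  refine le_of_mul_le_mul_left ?_ (show (0 : ℝ) < 8 * d by positivity)
  calc 8 * d * ham d A (fun z => if z ∈ T then 1 else 0)
      ≤ ∑ x ∈ S, ∑ y ∈ S, (t x y + t y x) := by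
        rw [eight_mul_ham hd]
        exact sum_le_sum fun x _ => sum_le_sum fun y _ => hpair x y
    _ = 2 * ∑ x ∈ S, ∑ y ∈ S, t x y := by
        simp only [sum_add_distrib]
        rw [sum_comm (f := fun x y => t y x), two_mul]
    _ ≤ 2 * (2 * d * #(innerBoundary d T)) := by
        gcongr
        exact sum_sum_mem_and_mem_nbrs_le S _
    _ ≤ 8 * d * #(innerBoundary d T) := by
        have : (0 : ℝ) ≤ d * #(innerBoundary d T) := by positivity
        linarith

theorem hamForm_single_self_le (hd : 0 < d) (x : A) :
    hamForm d A (Pi.single x 1) (Pi.single x 1) ≤ 1 := by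
  have hsingle : extz A (Pi.single x 1) = fun z => if z ∈ ({x.1} : Finset _) then 1 else 0 := by
    ext z
    by_cases hz : z ∈ A
    · simp [extz, hz, Pi.single_apply, Subtype.ext_iff]
    · have hzx : z ≠ x := fun h => hz (h ▸ x.2)
      simp [extz, hz, hzx]
  rw [hamForm_self, hsingle]
  refine (ham_indicator_le hd A _).trans ?_
  exact_mod_cast card_filter_le _ _

theorem hamForm_one_self_le (hd : 0 < d) : hamForm d A 1 1 ≤ #(innerBoundary d A) := by
  have hone : extz A 1 = fun z => if z ∈ A then 1 else 0 := by
    ext z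
    by_cases hz : z ∈ A <;> simp [extz, hz]
  rw [hamForm_self, hone]
  exact ham_indicator_le hd A A

theorem card_box_side (N : ℕ) : #(Icc (-(N / 2 : ℤ)) (N / 2 : ℤ)) = 2 * (N / 2) + 1 := by
  rw [Int.card_Icc]
  lia

theorem mem_box {d N : ℕ} {x : Fin d → ℤ} :
    x ∈ box d N ↔ ∀ i, -(N / 2 : ℤ) ≤ x i ∧ x i ≤ N / 2 := by
  unfold _root_.box
  simp only [Fintype.mem_piFinset, mem_Icc]

theorem card_box (d N : ℕ) : #(box d N) = (2 * (N / 2) + 1) ^ d := by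
  unfold _root_.box
  rw [Fintype.card_piFinset_const, card_box_side]

theorem innerBoundary_box_subset (d N : ℕ) : innerBoundary d (box d N) ⊆
    univ.biUnion fun i =>
      {x ∈ box d N | x i = (N / 2 : ℤ)} ∪ {x ∈ box d N | x i = -(N / 2 : ℤ)} := by
  intro x hx
  obtain ⟨hx, hxn⟩ := mem_filter.mp hx
  obtain ⟨y, hxy, hy⟩ := not_subset.mp hxn
  obtain ⟨i, hi⟩ := mem_nbrs.mp hxy
  by_contra hface
  simp only [mem_biUnion, mem_univ, true_and, mem_union, mem_filter, hx, not_exists] at hface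
  refine hy (mem_box.mpr fun j => ?_)
  have hxj := mem_box.mp hx j
  have hj := hface j
  by_cases hji : j = i
  · subst hji
    rcases hi with rfl | rfl <;> simp only [Pi.add_apply, Pi.single_eq_same] at hxj hj ⊢ <;> lia
  · rcases hi with rfl | rfl <;> simpa [Pi.single_apply, hji] using hxj

theorem card_innerBoundary_box_le (d N : ℕ) :
    #(innerBoundary d (box d N)) ≤ 2 * d * (2 * (N / 2) + 1) ^ (d - 1) := by
  have hface (i : Fin d) {c : ℤ} (hc : c ∈ Icc (-(N / 2 : ℤ)) (N / 2 : ℤ)) :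
      #{x ∈ box d N | x i = c} = (2 * (N / 2) + 1) ^ (d - 1) := by
    unfold _root_.box
    rw [Fintype.card_filter_piFinset_const_eq_of_mem _ i hc, card_box_side, Fintype.card_fin]
  calc #(innerBoundary d (box d N))
      ≤ ∑ i : Fin d,
          #({x ∈ box d N | x i = (N / 2 : ℤ)} ∪ {x ∈ box d N | x i = -(N / 2 : ℤ)}) :=
        (card_le_card (innerBoundary_box_subset d N)).trans card_biUnion_le
    _ ≤ ∑ _i : Fin d, 2 * (2 * (N / 2) + 1) ^ (d - 1) := by
        refine sum_le_sum fun i _ => (card_union_le _ _).trans_eq ?_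
        rw [hface i (mem_Icc.mpr (by lia)), hface i (mem_Icc.mpr (by lia)), ← two_mul]
    _ = 2 * d * (2 * (N / 2) + 1) ^ (d - 1) := by
        rw [sum_const, card_univ, Fintype.card_fin, smul_eq_mul]
        ring

theorem mul_pow_le_mul_card_box_sub {N : ℕ} {c h : ℝ} (hd : 0 < d) (hc : 0 ≤ c)
    (hN : 4 * d * h ^ 2 ≤ c * N) :
    c / 2 * N ^ d ≤ c * Fintype.card (box d N) - h ^ 2 * hamForm d (box d N) 1 1 := by
  set L : ℝ := ↑(2 * (N / 2) + 1)
  have hNL : (N : ℝ) ≤ L := Nat.cast_le.mpr (by lia)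
  have hcard : (Fintype.card (box d N) : ℝ) = L ^ d := by
    rw [Fintype.card_coe, card_box, Nat.cast_pow]
  have henergy : hamForm d (box d N) 1 1 ≤ 2 * d * L ^ (d - 1) :=
    (hamForm_one_self_le hd).trans <|
      (Nat.cast_le.mpr (card_innerBoundary_box_le d N)).trans_eq (by simp [L])
  have hsurface : h ^ 2 * hamForm d (box d N) 1 1 ≤ c / 2 * L ^ d := by
    calc h ^ 2 * hamForm d (box d N) 1 1 ≤ h ^ 2 * (2 * d * L ^ (d - 1)) := by gcongr
      _ = 4 * d * h ^ 2 / 2 * L ^ (d - 1) := by ring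
      _ ≤ c * N / 2 * L ^ (d - 1) := by gcongr
      _ ≤ c * L / 2 * L ^ (d - 1) := by gcongr
      _ = c / 2 * L ^ d := by rw [← mul_pow_sub_one hd.ne' L]; ring
  have hvolume : c / 2 * N ^ d ≤ c / 2 * L ^ d := by gcongr
  rw [hcard]
  linarith

end HamiltonianForm

section OneSite

open ProbabilityTheory
open scoped NNReal

/-- The logarithm of the one-site weight that gives a positive sign the probability `1 - p`, a
negative sign the probability `p`, and rewards the well `[0, a]` by the factor `exp b`. -/
noncomputable def foldedPotential (a b p t : ℝ) : ℝ :=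
  (if 0 ≤ t then log (1 - p) else log p) + b * if t ∈ Set.Icc 0 a then 1 else 0

theorem measurable_foldedPotential (a b p : ℝ) : Measurable (foldedPotential a b p) :=
  (Measurable.ite measurableSet_Ici measurable_const measurable_const).add
    ((Measurable.ite measurableSet_Icc measurable_const measurable_const).const_mul b)

theorem abs_foldedPotential_le (a b p t : ℝ) :
    |foldedPotential a b p t| ≤ |log (1 - p)| + |log p| + |b| := by
  refine (abs_add_le _ _).trans (add_le_add ?_ ?_) <;> split_ifs <;> simp

theorem integrable_foldedPotential {Ω : Type*} [MeasurableSpace Ω] {P : Measure Ω}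
    [IsFiniteMeasure P] {X : Ω → ℝ} (hX : Measurable X) (a b p : ℝ) :
    Integrable (fun ω => foldedPotential a b p (X ω)) P :=
  Integrable.of_bound ((measurable_foldedPotential a b p).comp hX).aestronglyMeasurable _
    (Filter.Eventually.of_forall fun ω => abs_foldedPotential_le a b p (X ω))

theorem integral_foldedPotential_ge {p : ℝ} (hp₀ : 0 ≤ p) (hp₁ : p ≤ 1) (a b : ℝ) (P : Measure ℝ)
    [IsProbabilityMeasure P] :
    log (1 - p) + log p * P.real (Set.Iio 0) + b * P.real (Set.Icc 0 a) ≤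
      ∫ t, foldedPotential a b p t ∂P := by
  have hneg : Integrable ((Set.Iio 0).indicator fun _ => log p) P :=
    (integrable_const _).indicator measurableSet_Iio
  have hwell : Integrable ((Set.Icc 0 a).indicator fun _ => b) P :=
    (integrable_const _).indicator measurableSet_Icc
  have hsign :
      Integrable (fun t => log (1 - p) + (Set.Iio 0).indicator (fun _ => log p) t) P :=
    (integrable_const _).add hneg
  calc log (1 - p) + log p * P.real (Set.Iio 0) + b * P.real (Set.Icc 0 a)
      = ∫ t, (log (1 - p) + (Set.Iio 0).indicator (fun _ => log p) t) +
          (Set.Icc 0 a).indicator (fun _ => b) t ∂P := by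
        rw [integral_add hsign hwell, integral_add (integrable_const _) hneg,
          integral_indicator_const _ measurableSet_Iio,
          integral_indicator_const _ measurableSet_Icc]
        simp [mul_comm]
    _ ≤ ∫ t, foldedPotential a b p t ∂P := by
        refine integral_mono (hsign.add hwell)
          (integrable_foldedPotential measurable_id a b p) fun t => ?_
        have hlog : log (1 - p) ≤ 0 := log_nonpos (by linarith) (by linarith)
        simp only [foldedPotential, Set.indicator_apply, Set.mem_Iio, ← not_le, mul_ite, mul_one,
          mul_zero]
        gcongr
        split_ifs <;> simp [hlog]

theorem gaussianReal_real_Iio_zero_le {h : ℝ} (hh : 0 ≤ h) {v : ℝ≥0} (hv : v ≠ 0) :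
    (gaussianReal h v).real (Set.Iio 0) ≤ rexp (-(h ^ 2 / (2 * v))) := by
  have : (v : ℝ) ≠ 0 := by exact_mod_cast hv
  calc (gaussianReal h v).real (Set.Iio 0)
      ≤ (gaussianReal h v).real {t | id t ≤ 0} :=
        measureReal_mono fun t ht => show id t ≤ 0 from ht.le
    _ ≤ rexp (-(-(h / v)) * 0) * mgf id (gaussianReal h v) (-(h / v)) :=
        measure_le_le_exp_mul_mgf 0 (neg_nonpos.mpr (by positivity))
          (integrable_exp_mul_gaussianReal _)
    _ = rexp (-(h ^ 2 / (2 * v))) := by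
        simp only [mgf_id_gaussianReal, mul_zero, exp_zero, one_mul]
        congr 1
        field_simp
        ring

theorem gaussianReal_real_Icc_ge {a h : ℝ} (ha : 0 < a) (hh : a ≤ h) {v : ℝ≥0} (hv : v ≠ 0) :
    a / 2 * (√(2 * π * v))⁻¹ * rexp (h * a / (4 * v)) * rexp (-(h ^ 2 / (2 * v))) ≤
      (gaussianReal h v).real (Set.Icc 0 a) := by
  have : (0 : ℝ) < v := by exact_mod_cast pos_iff_ne_zero.mpr hv
  have hpdf (t) (ht : t ∈ Set.Icc (a / 2) a) :
      (√(2 * π * v))⁻¹ * rexp (h * a / (4 * v) - h ^ 2 / (2 * v)) ≤ gaussianPDFReal h v t := by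
    rw [gaussianPDFReal]
    gcongr
    rw [← sub_nonneg]
    have hsq : 0 ≤ h ^ 2 - h * a / 2 - (t - h) ^ 2 := by nlinarith [ht.1, ht.2]
    calc 0 ≤ (h ^ 2 - h * a / 2 - (t - h) ^ 2) / (2 * v) := by positivity
      _ = _ := by field_simp; ring
  calc _ = (√(2 * π * v))⁻¹ * rexp (h * a / (4 * v) - h ^ 2 / (2 * v)) *
          volume.real (Set.Icc (a / 2) a) := by
        rw [Real.volume_real_Icc_of_le (by linarith), sub_eq_add_neg, Real.exp_add]
        ring
    _ ≤ ∫ t in Set.Icc (a / 2) a, gaussianPDFReal h v t :=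
        setIntegral_ge_of_const_le_real measurableSet_Icc (by simp) hpdf
          (integrable_gaussianPDFReal h v).integrableOn
    _ = (gaussianReal h v).real (Set.Icc (a / 2) a) := by
        rw [measureReal_def, gaussianReal_apply_eq_integral _ hv, ENNReal.toReal_ofReal]
        exact integral_nonneg fun t => gaussianPDFReal_nonneg _ _ _
    _ ≤ (gaussianReal h v).real (Set.Icc 0 a) :=
        measureReal_mono (Set.Icc_subset_Icc_left (by positivity))

theorem neg_two_mul_le_log_one_sub {p : ℝ} (hp₀ : 0 ≤ p) (hp : p ≤ 1 / 2) :
    -2 * p ≤ log (1 - p) := by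
  calc -2 * p ≤ 1 - (1 - p)⁻¹ := by
        rw [le_sub_comm, inv_le_iff_one_le_mul₀ (by linarith)]
        nlinarith
    _ ≤ log (1 - p) := one_sub_inv_le_log_of_pos (by linarith)

/-- At height `h` the well is more likely than the negative half-line by a factor exponential in
`h`, whereas the price `h ^ 2 / (2 * v₀)` of a negative sign is only quadratic. -/
theorem exists_height {a b v₀ v₁ : ℝ} (ha : 0 < a) (hb : 0 < b) (hv₀ : 0 < v₀) (hv₁ : 0 < v₁) :
    ∃ h, a ≤ h ∧ 1 ≤ h ^ 2 / (2 * v₀) ∧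
      3 + h ^ 2 / (2 * v₀) ≤ b * (a / 2 * (√(2 * π * v₁))⁻¹ * rexp (h * a / (4 * v₁))) := by
  set κ := b * (a / 2 * (√(2 * π * v₁))⁻¹)
  have : 0 < κ := by positivity
  have hgrowth := (isLittleO_pow_exp_pos_mul_atTop 2 (show 0 < a / (4 * v₁) by positivity)).bound
    (show 0 < κ * v₀ / 2 by positivity)
  obtain ⟨h, hexp, hah, hsq⟩ := (hgrowth.and ((Filter.eventually_ge_atTop a).and
    ((Filter.tendsto_pow_atTop two_ne_zero).eventually_ge_atTop (2 * v₀)))).exists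
  rw [norm_of_nonneg (sq_nonneg h), norm_of_nonneg (exp_nonneg _)] at hexp
  have hone : 1 ≤ h ^ 2 / (2 * v₀) := by rwa [one_le_div (by positivity)]
  refine ⟨h, hah, hone, ?_⟩
  calc 3 + h ^ 2 / (2 * v₀) ≤ 2 / v₀ * h ^ 2 := by
        have : 2 / v₀ * h ^ 2 = 4 * (h ^ 2 / (2 * v₀)) := by field_simp; ring
        linarith
    _ ≤ 2 / v₀ * (κ * v₀ / 2 * rexp (a / (4 * v₁) * h)) := by gcongr
    _ = b * (a / 2 * (√(2 * π * v₁))⁻¹ * rexp (h * a / (4 * v₁))) := by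
        rw [show a / (4 * v₁) * h = h * a / (4 * v₁) by ring]
        simp only [κ]
        field_simp

theorem exists_integral_foldedPotential_ge {a b v₀ v₁ : ℝ} (ha : 0 < a) (hb : 0 < b) (hv₀ : 0 < v₀)
    (hv₁ : 0 < v₁) :
    ∃ h p c : ℝ, 0 < p ∧ p < 1 ∧ 0 < c ∧ ∀ v : ℝ≥0, v₀ ≤ v → v ≤ v₁ →
      c ≤ ∫ t, foldedPotential a b p t ∂gaussianReal h v := by
  obtain ⟨h, hah, hone, hh⟩ := exists_height ha hb hv₀ hv₁
  set p := rexp (-(h ^ 2 / (2 * v₀))) with hp_def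
  have hp : 0 < p := exp_pos _
  have hp_half : p ≤ 1 / 2 := by
    rw [hp_def, Real.exp_neg, one_div]
    gcongr
    linarith [add_one_le_exp (h ^ 2 / (2 * v₀))]
  refine ⟨h, p, p, hp, by linarith, hp, fun v hv₀v hvv₁ => ?_⟩
  have hv : (0 : ℝ) < v := hv₀.trans_le hv₀v
  have hv_ne : v ≠ 0 := by exact_mod_cast hv.ne'
  have hh₀ : 0 ≤ h := ha.le.trans hah
  set E := rexp (-(h ^ 2 / (2 * v)))
  have hpE : p ≤ E := exp_le_exp.mpr (neg_le_neg (by gcongr))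
  have htail := gaussianReal_real_Iio_zero_le hh₀ hv_ne
  have hwell : (3 + h ^ 2 / (2 * v₀)) * E ≤ b * (gaussianReal h v).real (Set.Icc 0 a) := by
    calc (3 + h ^ 2 / (2 * v₀)) * E
        ≤ b * (a / 2 * (√(2 * π * v₁))⁻¹ * rexp (h * a / (4 * v₁))) * E := by gcongr
      _ ≤ b * (a / 2 * (√(2 * π * v))⁻¹ * rexp (h * a / (4 * v))) * E := by gcongr
      _ ≤ b * (gaussianReal h v).real (Set.Icc 0 a) := by
          rw [mul_assoc]
          gcongr
          exact gaussianReal_real_Icc_ge ha hah hv_ne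
  calc p ≤ E := hpE
    _ = -2 * E + -(h ^ 2 / (2 * v₀)) * E + (3 + h ^ 2 / (2 * v₀)) * E := by ring
    _ ≤ log (1 - p) + log p * (gaussianReal h v).real (Set.Iio 0) +
        b * (gaussianReal h v).real (Set.Icc 0 a) := by
        rw [hp_def, log_exp, ← hp_def]
        refine add_le_add (add_le_add ?_ ?_) hwell
        · linarith [neg_two_mul_le_log_one_sub hp.le hp_half]
        · rw [neg_mul, neg_mul]
          gcongr
    _ ≤ ∫ t, foldedPotential a b p t ∂gaussianReal h v :=
        integral_foldedPotential_ge hp.le (by linarith) a b _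

end OneSite

section Folding

open scoped ENNReal

theorem abs_intUnits_smul (s : ℤˣ) (t : ℝ) : |s • t| = |t| := by
  rcases Int.units_eq_one_or s with rfl | rfl <;> simp

theorem measurePreserving_intUnits_smul (s : ℤˣ) : MeasurePreserving fun t : ℝ => s • t := by
  rcases Int.units_eq_one_or s with rfl | rfl
  · simp only [one_smul]
    exact MeasurePreserving.id _
  · simpa only [Units.neg_smul, one_smul] using Measure.measurePreserving_neg volume

theorem measurable_abs_pi {ι : Type*} : Measurable fun φ : ι → ℝ => |φ| :=
  measurable_pi_lambda _ fun x => (measurable_pi_apply x).abs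

variable {ι : Type*} [Fintype ι] {w : ℝ → ℝ≥0∞}

theorem sum_prod_intUnits_smul [DecidableEq ι] (hw : ∀ t, t ≠ 0 → w t + w (-t) = 1) {φ : ι → ℝ}
    (hφ : ∀ x, φ x ≠ 0) : ∑ σ : ι → ℤˣ, ∏ x, w (σ x • φ x) = 1 := by
  calc ∑ σ : ι → ℤˣ, ∏ x, w (σ x • φ x) = ∏ x, ∑ s : ℤˣ, w (s • φ x) := by
        rw [prod_univ_sum, Fintype.piFinset_univ]
    _ = 1 := prod_eq_one fun x _ => by simpa [UnitsInt.univ] using hw _ (hφ x)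

theorem ae_forall_apply_ne (t : ℝ) : ∀ᵐ φ : ι → ℝ, ∀ x, φ x ≠ t :=
  ae_all_iff.mpr fun x => Measure.ae_eval_ne (fun _ => (volume : Measure ℝ)) x t

theorem two_pow_mul_lintegral_prod_mul_comp_abs (hw_meas : Measurable w)
    (hw : ∀ t, t ≠ 0 → w t + w (-t) = 1) {F : (ι → ℝ) → ℝ≥0∞} (hF : Measurable F) :
    2 ^ Fintype.card ι * ∫⁻ φ, (∏ x, w (φ x)) * F |φ| = ∫⁻ φ, F |φ| := by
  classical
  have hmeas (σ : ι → ℤˣ) : Measurable fun φ : ι → ℝ => (∏ x, w (σ x • φ x)) * F |φ| :=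
    (Finset.measurable_prod _ fun x _ => hw_meas.comp <|
      (measurePreserving_intUnits_smul (σ x)).measurable.comp (measurable_pi_apply x)).mul
      (hF.comp measurable_abs_pi)
  have hflip (σ : ι → ℤˣ) :
      ∫⁻ φ, (∏ x, w (φ x)) * F |φ| = ∫⁻ φ, (∏ x, w (σ x • φ x)) * F |φ| := by
    rw [← (volume_preserving_pi fun x => measurePreserving_intUnits_smul (σ x)).lintegral_comp
      (by simpa using hmeas 1)]
    refine lintegral_congr fun φ => ?_
    congr 2
    exact funext fun x => abs_intUnits_smul (σ x) (φ x)
  calc 2 ^ Fintype.card ι * ∫⁻ φ, (∏ x, w (φ x)) * F |φ|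
      = ∑ σ : ι → ℤˣ, ∫⁻ φ, (∏ x, w (σ x • φ x)) * F |φ| := by
        simp [← hflip, card_univ]
    _ = ∫⁻ φ, ∑ σ : ι → ℤˣ, (∏ x, w (σ x • φ x)) * F |φ| :=
        (lintegral_finsetSum _ fun σ _ => hmeas σ).symm
    _ = ∫⁻ φ, F |φ| := by
        refine lintegral_congr_ae ?_
        filter_upwards [ae_forall_apply_ne 0] with φ hφ
        rw [← sum_mul, sum_prod_intUnits_smul hw hφ, one_mul]

theorem lintegral_prod_mul_comp_abs (hw_meas : Measurable w)
    (hw : ∀ t, t ≠ 0 → w t + w (-t) = 1) {F : (ι → ℝ) → ℝ≥0∞} (hF : Measurable F) :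
    ∫⁻ φ, (∏ x, w (φ x)) * F |φ| = ∫⁻ φ in Set.Ici 0, F φ := by
  set u : ℝ → ℝ≥0∞ := (Set.Ici 0).indicator 1
  have hu_meas : Measurable u := measurable_one.indicator measurableSet_Ici
  have hu (t : ℝ) (ht : t ≠ 0) : u t + u (-t) = 1 := by
    rcases lt_or_gt_of_ne ht with ht | ht <;> simp [u, ht.le, not_le.mpr ht]
  have hfold := (two_pow_mul_lintegral_prod_mul_comp_abs hw_meas hw hF).trans
    (two_pow_mul_lintegral_prod_mul_comp_abs hu_meas hu hF).symm
  rw [ENNReal.mul_right_inj (by simp) (by simp)] at hfold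
  rw [hfold, ← lintegral_indicator measurableSet_Ici]
  refine lintegral_congr fun φ => ?_
  by_cases hφ : φ ∈ Set.Ici 0
  · rw [Set.indicator_of_mem hφ, abs_of_nonneg hφ, prod_eq_one fun x _ => ?_, one_mul]
    exact Set.indicator_of_mem (hφ x) _
  · obtain ⟨x, hx⟩ := not_forall.mp hφ
    rw [Set.indicator_of_notMem hφ, prod_eq_zero (mem_univ x) (Set.indicator_of_notMem hx _),
      zero_mul]

/-- With `w` read as the law of independent random signs, this folds a field of arbitrary signs
onto the positive orthant. -/
theorem lintegral_prod_mul_gaussianField_le {B : LinearMap.BilinForm ℝ (ι → ℝ)}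
    (habs : ∀ φ, B |φ| |φ| ≤ B φ φ) (hw_meas : Measurable w)
    (hw : ∀ t, t ≠ 0 → w t + w (-t) = 1) {F : (ι → ℝ) → ℝ≥0∞} (hF : Measurable F)
    (hF_abs : ∀ φ, F φ ≤ F |φ|) :
    ∫⁻ φ, (∏ x, w (φ x)) * F φ ∂gaussianField B ≤ ∫⁻ φ in Set.Ici 0, F φ ∂gaussianField B := by
  have : Measurable fun φ => B φ φ := continuous_bilinForm_self.measurable
  rw [gaussianField, lintegral_tilted, setLIntegral_tilted' _ _ measurableSet_Ici,
    ← lintegral_prod_mul_comp_abs hw_meas hw (by fun_prop)]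
  refine lintegral_mono fun φ => ?_
  rw [mul_left_comm]
  gcongr
  · exact habs φ
  · exact hF_abs φ

end Folding

section LowerBound

open ProbabilityTheory
open scoped NNReal

theorem ofReal_exp_integral_le_lintegral {Ω : Type*} [MeasurableSpace Ω] {P : Measure Ω}
    [IsProbabilityMeasure P] {f : Ω → ℝ} (hf : Integrable f P) :
    ENNReal.ofReal (rexp (∫ ω, f ω ∂P)) ≤ ∫⁻ ω, ENNReal.ofReal (rexp (f ω)) ∂P := by
  have hnonneg : 0 ≤ᵐ[P] fun ω => rexp (f ω) := Filter.Eventually.of_forall fun ω => exp_nonneg _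
  by_cases hexp : Integrable (fun ω => rexp (f ω)) P
  · rw [← ofReal_integral_eq_lintegral_ofReal hexp hnonneg]
    exact ENNReal.ofReal_le_ofReal <| convexOn_exp.map_integral_le continuous_exp.continuousOn
      isClosed_univ (by simp) hf hexp
  · have htop := (lintegral_ofReal_ne_top_iff_integrable
      (continuous_exp.comp_aestronglyMeasurable hf.1) hnonneg).not.mpr hexp
    rw [not_not.mp htop]
    exact le_top

variable {ι : Type*} [Fintype ι] {B : LinearMap.BilinForm ℝ (ι → ℝ)} {C : ℝ}

/-- Jensen's inequality after the change of measure `φ ↦ φ + v`, whose relative entropy is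
`B v v`. -/
theorem IsPointwiseCoercive.ofReal_exp_integral_sub_le_lintegral (hB : IsPointwiseCoercive B C)
    (hsymm : B.IsSymm) (v : ι → ℝ) {G : (ι → ℝ) → ℝ}
    (hG : Integrable (fun φ => G (φ + v)) (gaussianField B)) :
    ENNReal.ofReal (rexp (∫ φ, G (φ + v) ∂gaussianField B - B v v)) ≤
      ∫⁻ φ, ENNReal.ofReal (rexp (G φ)) ∂gaussianField B := by
  have := hB.isProbabilityMeasure_gaussianField
  have hlin := (hB.integrable_bilinForm_right hsymm v).const_mul (-2)
  have hcm : Integrable (fun φ => -2 * B φ v - B v v) (gaussianField B) :=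
    hlin.sub (integrable_const _)
  calc ENNReal.ofReal (rexp (∫ φ, G (φ + v) ∂gaussianField B - B v v))
      = ENNReal.ofReal (rexp (∫ φ, (-2 * B φ v - B v v) + G (φ + v) ∂gaussianField B)) := by
        rw [integral_add hcm hG, integral_sub hlin (integrable_const _), integral_const_mul,
          hB.integral_bilinForm_right hsymm]
        simp [neg_add_eq_sub]
    _ ≤ ∫⁻ φ, ENNReal.ofReal (rexp ((-2 * B φ v - B v v) + G (φ + v))) ∂gaussianField B :=
        ofReal_exp_integral_le_lintegral (hcm.add hG)
    _ = ∫⁻ φ, ENNReal.ofReal (rexp (G φ)) ∂gaussianField B := by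
        simp only [Real.exp_add, ENNReal.ofReal_mul (exp_nonneg _)]
        exact (lintegral_gaussianField_eq_lintegral_add hsymm v
          fun φ => ENNReal.ofReal (rexp (G φ))).symm

/-- The number of sites at which `φ` lies in the well `[0, a]`, as a real number. -/
noncomputable def pinCount (a : ℝ) (φ : ι → ℝ) : ℝ :=
  ∑ x, if φ x ∈ Set.Icc 0 a then 1 else 0

theorem measurable_pinCount (a : ℝ) : Measurable (pinCount a : (ι → ℝ) → ℝ) :=
  Finset.measurable_sum _ fun x _ =>
    Measurable.ite (measurable_pi_apply x measurableSet_Icc) measurable_const measurable_const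

theorem pinCount_nonneg (a : ℝ) (φ : ι → ℝ) : 0 ≤ pinCount a φ :=
  sum_nonneg fun x _ => by split_ifs <;> simp

theorem pinCount_le_card (a : ℝ) (φ : ι → ℝ) : pinCount a φ ≤ Fintype.card ι := by
  calc pinCount a φ ≤ ∑ _x : ι, (1 : ℝ) := sum_le_sum fun x _ => by split_ifs <;> simp
    _ = Fintype.card ι := by simp [card_univ]

theorem pinCount_le_pinCount_abs (a : ℝ) (φ : ι → ℝ) : pinCount a φ ≤ pinCount a |φ| := by
  refine sum_le_sum fun x _ => ?_
  by_cases hx : φ x ∈ Set.Icc 0 a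
  · rw [Pi.abs_apply, abs_of_nonneg hx.1]
  · rw [if_neg hx]
    split_ifs <;> simp

theorem exp_sum_foldedPotential {p : ℝ} (hp₀ : 0 < p) (hp₁ : p < 1) (a b : ℝ) (φ : ι → ℝ) :
    rexp (∑ x, foldedPotential a b p (φ x)) =
      (∏ x, if 0 ≤ φ x then 1 - p else p) * rexp (b * pinCount a φ) := by
  have hlog (t : ℝ) : rexp (if 0 ≤ t then log (1 - p) else log p) =
      if 0 ≤ t then 1 - p else p := by
    split_ifs
    · exact exp_log (by linarith)
    · exact exp_log hp₀
  simp only [foldedPotential, sum_add_distrib, ← mul_sum, Real.exp_add, Real.exp_sum, hlog]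
  rfl

theorem lintegral_exp_sum_foldedPotential_le {a b p : ℝ} (hb : 0 ≤ b) (hp₀ : 0 < p) (hp₁ : p < 1)
    (habs : ∀ φ, B |φ| |φ| ≤ B φ φ) :
    ∫⁻ φ, ENNReal.ofReal (rexp (∑ x, foldedPotential a b p (φ x))) ∂gaussianField B ≤
      ∫⁻ φ in Set.Ici 0, ENNReal.ofReal (rexp (b * pinCount a φ)) ∂gaussianField B := by
  have hweight (t : ℝ) : 0 ≤ if 0 ≤ t then 1 - p else p := by split_ifs <;> linarith
  simp only [exp_sum_foldedPotential hp₀ hp₁, ENNReal.ofReal_mul (prod_nonneg fun _ _ => hweight _),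
    ENNReal.ofReal_prod_of_nonneg fun _ _ => hweight _]
  refine lintegral_prod_mul_gaussianField_le habs
    (w := fun t => ENNReal.ofReal (if 0 ≤ t then 1 - p else p))
    (Measurable.ite measurableSet_Ici measurable_const measurable_const).ennreal_ofReal
    (fun t ht => ?_) (by have := measurable_pinCount (ι := ι) a; fun_prop) fun φ => ?_
  · rw [← ENNReal.ofReal_add (hweight _) (hweight _)]
    rcases lt_or_gt_of_ne ht with ht | ht <;> simp [ht.le, not_le.mpr ht]
  · gcongr
    exact pinCount_le_pinCount_abs a φ

theorem IsPointwiseCoercive.card_mul_le_integral_sum_foldedPotential [DecidableEq ι]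
    (hB : IsPointwiseCoercive B C) (hsymm : B.IsSymm) {K : ℝ}
    (hK : ∀ x, B (Pi.single x 1) (Pi.single x 1) ≤ K) {a b p h c : ℝ}
    (hc : ∀ v : ℝ≥0, 1 ≤ 2 * K * v → 2 * v ≤ C →
      c ≤ ∫ t, foldedPotential a b p t ∂gaussianReal h v) :
    c * Fintype.card ι ≤ ∫ φ, ∑ x, foldedPotential a b p (φ x + h) ∂gaussianField B := by
  have := hB.isProbabilityMeasure_gaussianField
  have hsite (x : ι) : c ≤ ∫ φ, foldedPotential a b p (φ x + h) ∂gaussianField B := by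
    obtain ⟨v, hv₀, hv₁, hmap⟩ := hB.exists_map_eval_gaussianField hsymm (hK x)
    have hmeas : Measurable fun φ : ι → ℝ => φ x + h := by fun_prop
    have hshift : (gaussianField B).map (fun φ => φ x + h) = gaussianReal h v := by
      rw [← zero_add h, ← gaussianReal_map_add_const, ← hmap,
        Measure.map_map (by fun_prop) (by fun_prop)]
      simp [Function.comp_def]
    calc c ≤ ∫ t, foldedPotential a b p t ∂(gaussianField B).map fun φ => φ x + h :=
          hshift ▸ hc v hv₀ hv₁
      _ = ∫ φ, foldedPotential a b p (φ x + h) ∂gaussianField B :=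
          integral_map hmeas.aemeasurable (measurable_foldedPotential a b p).aestronglyMeasurable
  rw [integral_finsetSum _ fun x _ => integrable_foldedPotential (by fun_prop) a b p]
  calc c * Fintype.card ι = ∑ _x : ι, c := by simp [mul_comm, card_univ]
    _ ≤ _ := sum_le_sum fun x _ => hsite x

theorem IsPointwiseCoercive.ofReal_exp_le_setLIntegral_exp_pinCount [DecidableEq ι]
    (hB : IsPointwiseCoercive B C) (hsymm : B.IsSymm) {K : ℝ}
    (hK : ∀ x, B (Pi.single x 1) (Pi.single x 1) ≤ K) (habs : ∀ φ, B |φ| |φ| ≤ B φ φ)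
    {a b p h c : ℝ} (hb : 0 ≤ b) (hp₀ : 0 < p) (hp₁ : p < 1)
    (hc : ∀ v : ℝ≥0, 1 ≤ 2 * K * v → 2 * v ≤ C →
      c ≤ ∫ t, foldedPotential a b p t ∂gaussianReal h v) :
    ENNReal.ofReal (rexp (c * Fintype.card ι - h ^ 2 * B 1 1)) ≤
      ∫⁻ φ in Set.Ici 0, ENNReal.ofReal (rexp (b * pinCount a φ)) ∂gaussianField B := by
  have := hB.isProbabilityMeasure_gaussianField
  have henergy : B (h • 1) (h • 1) = h ^ 2 * B 1 1 := by
    simp only [map_smul, LinearMap.smul_apply, smul_eq_mul]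
    ring
  have hint : Integrable (fun φ => ∑ x, foldedPotential a b p ((φ + h • 1) x))
      (gaussianField B) :=
    integrable_finsetSum _ fun x _ => integrable_foldedPotential (by fun_prop) a b p
  refine le_trans ?_ <| (hB.ofReal_exp_integral_sub_le_lintegral hsymm (h • 1)
    (G := fun φ => ∑ x, foldedPotential a b p (φ x)) hint).trans
    (lintegral_exp_sum_foldedPotential_le hb hp₀ hp₁ habs)
  rw [henergy]
  gcongr
  simpa using hB.card_mul_le_integral_sum_foldedPotential hsymm hK hc

end LowerBound

section Conclusion

open ProbabilityTheory
open scoped ENNReal NNReal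

section Tilted

variable {Ω : Type*} [MeasurableSpace Ω] {μ : Measure Ω} {f : Ω → ℝ}

theorem inv_smul_withDensity_exp_eq_tilted [NeZero μ] (hf : Integrable (fun ω => rexp (f ω)) μ) :
    (ENNReal.ofReal (∫ ω, rexp (f ω) ∂μ))⁻¹ • μ.withDensity (fun ω => ENNReal.ofReal (rexp (f ω))) =
      μ.tilted f := by
  have hZ : 0 < ∫ ω, rexp (f ω) ∂μ := integral_exp_pos hf
  rw [Measure.tilted, ← withDensity_smul' _ _ (by simpa using hZ)]
  congr 1
  ext ω
  rw [Pi.smul_apply, smul_eq_mul, ENNReal.ofReal_div_of_pos hZ, ENNReal.div_eq_inv_mul]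

theorem one_sub_le_measure_inter_div {ν : Measure Ω} [IsFiniteMeasure ν] {s t : Set Ω} {q : ℝ≥0∞}
    (ht : ν t ≠ 0) (h : ν (t \ s) ≤ q * ν t) : 1 - q ≤ ν (s ∩ t) / ν t := by
  rw [ENNReal.le_div_iff_mul_le (.inl ht) (.inl (measure_ne_top _ _)),
    ENNReal.sub_mul fun _ _ => measure_ne_top _ _, one_mul, tsub_le_iff_right, Set.inter_comm]
  exact (measure_le_inter_add_sdiff ν t s).trans (by gcongr)

theorem one_sub_le_tilted_inter_div [IsProbabilityMeasure μ]
    (hf : Integrable (fun ω => rexp (f ω)) μ) {s : Set Ω} {m : ℝ}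
    (hm : ENNReal.ofReal (rexp m) ≤ ∫⁻ ω in s, ENNReal.ofReal (rexp (f ω)) ∂μ) (T : ℝ) :
    1 - ENNReal.ofReal (rexp (T - m)) ≤
      μ.tilted f ({ω | T < f ω} ∩ s) / μ.tilted f s := by
  have := isProbabilityMeasure_tilted hf
  have hlow : ∫⁻ ω in s \ {ω | T < f ω}, ENNReal.ofReal (rexp (f ω)) ∂μ ≤
      ENNReal.ofReal (rexp (T - m)) * ∫⁻ ω in s, ENNReal.ofReal (rexp (f ω)) ∂μ := by
    calc ∫⁻ ω in s \ {ω | T < f ω}, ENNReal.ofReal (rexp (f ω)) ∂μ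
        ≤ ∫⁻ _ in s \ {ω | T < f ω}, ENNReal.ofReal (rexp T) ∂μ :=
          setLIntegral_mono measurable_const fun ω hω => by
            gcongr
            exact not_lt.mp hω.2
      _ = ENNReal.ofReal (rexp T) * μ (s \ {ω | T < f ω}) := setLIntegral_const _ _
      _ ≤ ENNReal.ofReal (rexp T) := mul_le_of_le_one_right' prob_le_one
      _ = ENNReal.ofReal (rexp (T - m)) * ENNReal.ofReal (rexp m) := by
          rw [← ENNReal.ofReal_mul (exp_nonneg _), ← Real.exp_add, sub_add_cancel]
      _ ≤ _ := by gcongr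
  refine one_sub_le_measure_inter_div ?_ ?_ <;>
    simp only [← inv_smul_withDensity_exp_eq_tilted hf, Measure.smul_apply, withDensity_apply',
      smul_eq_mul]
  · have hpos : 0 < ∫⁻ ω in s, ENNReal.ofReal (rexp (f ω)) ∂μ :=
      (ENNReal.ofReal_pos.mpr (exp_pos m)).trans_le hm
    exact mul_ne_zero (ENNReal.inv_ne_zero.mpr ENNReal.ofReal_ne_top) hpos.ne'
  · rw [mul_left_comm]
    gcongr

end Tilted

theorem integrable_exp_mul_pinCount {ι : Type*} [Fintype ι] (P : Measure (ι → ℝ))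
    [IsFiniteMeasure P] (a b : ℝ) : Integrable (fun φ => rexp (b * pinCount a φ)) P := by
  have hmeas : Measurable fun φ : ι → ℝ => rexp (b * pinCount a φ) :=
    ((measurable_pinCount a).const_mul b).exp
  refine Integrable.of_bound hmeas.aestronglyMeasurable (rexp (|b| * Fintype.card ι))
    (Filter.Eventually.of_forall fun φ => ?_)
  rw [norm_of_nonneg (exp_nonneg _)]
  gcongr
  · exact pinCount_nonneg a φ
  · exact le_abs_self b
  · exact pinCount_le_card a φ

theorem pinCount_eq_numPinned (d N : ℕ) (a : ℝ) (ψ : box d N → ℝ) :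
    pinCount a ψ = numPinned d N a ψ :=
  Finset.sum_boole _ _

theorem wallOn_box (d N : ℕ) : wallOn d N (box d N) = Set.Ici 0 := by
  ext ψ
  simp [wallOn, Pi.le_def]

theorem pin_eq_tilted_gaussianField {d : ℕ} (hd : 3 ≤ d) (N : ℕ) (a b : ℝ) :
    pin d N a b = (gaussianField (hamForm d (box d N))).tilted fun ψ => b * pinCount a ψ := by
  have hB := isPointwiseCoercive_hamForm (A := box d N) hd
  have := hB.isProbabilityMeasure_gaussianField
  have hdensity (ψ : box d N → ℝ) :
      pinDensity d N a b ψ = rexp (-hamForm d (box d N) ψ ψ + b * pinCount a ψ) := by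
    rw [hamForm_self]
    rfl
  have hint : Integrable fun ψ => rexp (-hamForm d (box d N) ψ ψ + b * pinCount a ψ) := by
    have h := integrable_exp_mul_pinCount (gaussianField (hamForm d (box d N))) a b
    rw [gaussianField, integrable_tilted_iff hB.integrable_exp] at h
    simpa only [Real.exp_add, smul_eq_mul] using h
  rw [gaussianField, tilted_tilted hB.integrable_exp, pin, pinZ]
  simp only [hdensity]
  exact inv_smul_withDensity_exp_eq_tilted hint

theorem ofReal_exp_le_setLIntegral_gaussianField_hamForm {d N : ℕ} (hd : 3 ≤ d)
    {a b p h c : ℝ} (hb : 0 ≤ b) (hp₀ : 0 < p) (hp₁ : p < 1) (hc : 0 ≤ c)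
    (hlow : ∀ v : ℝ≥0, 1 / 2 ≤ v → v ≤ 8 * d →
      c ≤ ∫ t, foldedPotential a b p t ∂gaussianReal h v)
    (hN : 4 * d * h ^ 2 ≤ c * N) :
    ENNReal.ofReal (rexp (c / 2 * N ^ d)) ≤
      ∫⁻ ψ in Set.Ici 0, ENNReal.ofReal (rexp (b * pinCount a ψ))
        ∂gaussianField (hamForm d (box d N)) := by
  refine le_trans ?_ <| (isPointwiseCoercive_hamForm hd).ofReal_exp_le_setLIntegral_exp_pinCount
    hamForm_isSymm (hamForm_single_self_le (by lia)) hamForm_abs_le hb hp₀ hp₁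
    fun v hv₀ hv₁ => hlow v (by linarith) (by linarith)
  gcongr
  exact mul_pow_le_mul_card_box_sub (by lia) hc hN

end Conclusion

/-- Absence of a wetting transition for the GFF with square-well pinning above a
hard wall: for `d ≥ 3` and any `a, b > 0` there are `ε, η > 0` with
`P̃_{N,a,b}(ξ̃_N > εN^d | Ω_N⁺) ≥ 1 - e^{-ηN^d}` for all large `N`. -/
theorem no_wetting_transition (d : ℕ) (hd : 3 ≤ d) (a b : ℝ) (ha : 0 < a) (hb : 0 < b) :
    ∃ ε η : ℝ, 0 < ε ∧ 0 < η ∧ ∃ N₀ : ℕ, ∀ N : ℕ, N₀ ≤ N →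
      pin d N a b
            ({ψ | ε * (N : ℝ) ^ d < (numPinned d N a ψ : ℝ)} ∩ wallOn d N (box d N)) /
          pin d N a b (wallOn d N (box d N)) ≥
        1 - ENNReal.ofReal (Real.exp (-η * (N : ℝ) ^ d)) := by
  obtain ⟨h, p, c, hp₀, hp₁, hc, hlow⟩ :=
    exists_integral_foldedPotential_ge (v₀ := 1 / 2) (v₁ := 8 * d) ha hb (by norm_num)
      (by positivity)
  refine ⟨c / (4 * b), c / 4, by positivity, by positivity, ⌈4 * d * h ^ 2 / c⌉₊, fun N hN => ?_⟩
  have := (isPointwiseCoercive_hamForm (A := box d N) hd).isProbabilityMeasure_gaussianField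
  have hbound := ofReal_exp_le_setLIntegral_gaussianField_hamForm hd hb.le hp₀ hp₁ hc.le hlow
    ((div_le_iff₀' hc).mp (Nat.ceil_le.mp hN))
  have hevent : {ψ | c / (4 * b) * (N : ℝ) ^ d < (numPinned d N a ψ : ℝ)} =
      {ψ | c / 4 * (N : ℝ) ^ d < b * pinCount a ψ} := by
    ext ψ
    rw [Set.mem_ofPred_eq, Set.mem_ofPred_eq, pinCount_eq_numPinned, ← div_lt_iff₀' hb]
    field_simp
  have hprob := one_sub_le_tilted_inter_div (integrable_exp_mul_pinCount _ a b) hbound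
    (c / 4 * (N : ℝ) ^ d)
  rw [pin_eq_tilted_gaussianField hd, wallOn_box, hevent,
    show -(c / 4) * (N : ℝ) ^ d = c / 4 * N ^ d - c / 2 * N ^ d by ring]
  exact hprob
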